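/- arXiv:2111.06194 — 2 statements merged into one kernel-verified Lean document; each statement's English description precedes it below -/
import Mathlib

section
/- Assume s̄ ≠ 0 and val(P(s̄)) ∈ ℝ. (i) If ν is lower semi-continuous at s̄, then val(D(s̄)) = val(P(s̄)). (ii) If ∂ν(s̄) ≠ ∅, then val(D(s̄)) = val(P(s̄)) and Sol(D(s̄)) = ∂ν(s̄) = {λ ∈ Y : s̄ ∈ ∂θ(λ)} = [∂θ]⁻¹(s̄). -/
open Set Filter Topology Bornology Metric
open scoped RealInnerProductSpace

noncomputable section

variable {E : Type*} [NormedAddCommGroup E] [InnerProductSpace ℝ E]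
variable {Y : Type*} [NormedAddCommGroup Y] [InnerProductSpace ℝ Y]

/-- The set of feasible shifts `S = {s | ∃ x, g x + s ∈ K}`. -/
def feasShifts (g : E → Y) (K : Set Y) : Set Y := {s | ∃ x, g x + s ∈ K}

/-- The graph of the set-valued mapping `G_K(x) = -g(x) + K`,
i.e. `{(x, y) | g x + y ∈ K}`. -/
def gphGK (g : E → Y) (K : Set Y) : Set (E × Y) := {p | g p.1 + p.2 ∈ K}

/-- Recession cone of a convex set. -/
def recCone {Z : Type*} [AddCommGroup Z] [Module ℝ Z] (C : Set Z) : Set Z :=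
  {d | ∀ z ∈ C, ∀ t : ℝ, 0 ≤ t → z + t • d ∈ C}

/-- Horizon (recession) function of a finite-valued function `f`. -/
def horizonFn (f : E → ℝ) (h : E) : EReal :=
  ⨆ t : {t : ℝ // 0 < t}, (((f ((t : ℝ) • h) - f 0) / (t : ℝ) : ℝ) : EReal)

/-- The optimal value function `ν(s) = inf {f x : g x + s ∈ K}` of the shifted problem. -/
def valFn (f : E → ℝ) (g : E → Y) (K : Set Y) (s : Y) : EReal :=
  sInf ((fun x => (f x : EReal)) '' {x | g x + s ∈ K})

/-- The solution set `X(s)` of the shifted problem. -/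
def solSet (f : E → ℝ) (g : E → Y) (K : Set Y) (s : Y) : Set E :=
  {x | g x + s ∈ K ∧ ∀ x', g x' + s ∈ K → f x ≤ f x'}

/-- The Lagrangian `l(x,y,λ) = f x + ⟨λ, g x - y⟩`. -/
def lagr (f : E → ℝ) (g : E → Y) (x : E) (y : Y) (l : Y) : ℝ :=
  f x + ⟪l, g x - y⟫

/-- The augmented Lagrangian `l_r(x,y,λ) = f x + ⟨λ, g x - y⟩ + (r/2)‖g x - y‖²`. -/
def auglagr (f : E → ℝ) (g : E → Y) (r : ℝ) (x : E) (y : Y) (l : Y) : ℝ :=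
  f x + ⟪l, g x - y⟫ + r / 2 * ‖g x - y‖ ^ 2

/-- The dual function `θ(λ) = - inf {l(x,y,λ) : x ∈ ℝⁿ, y ∈ K}`. -/
def dualFn (f : E → ℝ) (g : E → Y) (K : Set Y) (l : Y) : EReal :=
  - sInf ((fun p : E × Y => ((lagr f g p.1 p.2 l : ℝ) : EReal)) '' {p | p.2 ∈ K})

/-- Fenchel conjugate of an extended-real-valued function. -/
def econj (h : Y → EReal) (l : Y) : EReal := ⨆ s : Y, (⟪l, s⟫ : EReal) - h s

/-- Convex subdifferential of an extended-real-valued function. -/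
def esubdiff (h : Y → EReal) (s : Y) : Set Y :=
  {l | ∀ s', h s + (⟪l, s' - s⟫ : EReal) ≤ h s'}

/-- Convexity of an extended-real-valued function, via its epigraph. -/
def ERealConvexOn (h : Y → EReal) : Prop :=
  Convex ℝ {p : Y × ℝ | h p.1 ≤ (p.2 : EReal)}

/-- Properness of an extended-real-valued function. -/
def ERealProper (h : Y → EReal) : Prop := (∀ s, h s ≠ ⊥) ∧ ∃ s, h s ≠ ⊤

/-- The optimal value `val(D(s)) = sup_λ [⟨s,λ⟩ - θ(λ)]` of the dual problem `D(s)`. -/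
def dualVal (f : E → ℝ) (g : E → Y) (K : Set Y) (s : Y) : EReal :=
  ⨆ l : Y, (⟪s, l⟫ : EReal) - dualFn f g K l

/-- The solution set `Sol(D(s))` of the dual problem `D(s)`. -/
def dualSol (f : E → ℝ) (g : E → Y) (K : Set Y) (s : Y) : Set Y :=
  {l | ∀ l', (⟪s, l'⟫ : EReal) - dualFn f g K l' ≤ (⟪s, l⟫ : EReal) - dualFn f g K l}

/-- The set of proximal points `argmin_{λ'} [h(λ') + ‖λ' - λ‖²/(2r)]`. -/
def proxSet (h : Y → EReal) (r : ℝ) (l : Y) : Set Y :=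
  {m | ∀ m', h m + ((‖m - l‖ ^ 2 / (2 * r) : ℝ) : EReal) ≤
      h m' + ((‖m' - l‖ ^ 2 / (2 * r) : ℝ) : EReal)}

/-- The Moreau–Yosida regularization `h_r(λ) = inf_{λ'} [h(λ') + ‖λ' - λ‖²/(2r)]`. -/
def moreau (h : Y → EReal) (r : ℝ) (l : Y) : EReal :=
  ⨅ m : Y, (h m + ((‖m - l‖ ^ 2 / (2 * r) : ℝ) : EReal))

theorem key_dual (f : E → ℝ) (g : E → Y) (K : Set Y) (s l : Y) (c : ℝ) :
    (c : EReal) ≤ (⟪s, l⟫ : EReal) - dualFn f g K l ↔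
      ∀ x s', g x + s' ∈ K → c + ⟪l, s' - s⟫ ≤ f x := by
  have h1 : (c : EReal) ≤ (⟪s, l⟫ : EReal) - dualFn f g K l ↔
      ((c - ⟪s, l⟫ : ℝ) : EReal) ≤ - dualFn f g K l := by
    induction dualFn f g K l using EReal.rec with
    | bot => simp
    | top => simp [sub_eq_add_neg]
    | coe r =>
      norm_cast
      constructor <;> intro h <;> linarith
  rw [h1, dualFn, neg_neg, le_sInf_iff]
  constructor
  · intro h x s' hx
    have := h _ ⟨(x, g x + s'), hx, rfl⟩
    simp only [EReal.coe_le_coe_iff, lagr] at this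
    rw [real_inner_comm l s, inner_sub_right, inner_add_right] at this
    rw [inner_sub_right]
    linarith
  · rintro h _ ⟨⟨x, y⟩, hy, rfl⟩
    have := h x (y - g x) (by simpa using hy)
    simp only [EReal.coe_le_coe_iff, lagr]
    rw [inner_sub_right, inner_sub_right] at this
    rw [real_inner_comm l s, inner_sub_right]
    linarith

theorem key_sub (f : E → ℝ) (g : E → Y) (K : Set Y) (s l : Y) (v : ℝ)
    (hv : valFn f g K s = (v : EReal)) :
    l ∈ esubdiff (valFn f g K) s ↔
      (v : EReal) ≤ (⟪s, l⟫ : EReal) - dualFn f g K l := by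
  rw [key_dual]
  simp only [esubdiff, mem_ofPred_eq, hv]
  constructor
  · intro h x s' hx
    have h2 : valFn f g K s' ≤ (f x : EReal) := sInf_le ⟨x, hx, rfl⟩
    exact_mod_cast (h s').trans h2
  · intro h s'
    apply le_sInf
    rintro _ ⟨x, hx, rfl⟩
    have := h x s' hx
    change _ ≤ ((f x : ℝ) : EReal)
    exact_mod_cast this

theorem weak_dual (f : E → ℝ) (g : E → Y) (K : Set Y) (s l : Y) :
    (⟪s, l⟫ : EReal) - dualFn f g K l ≤ valFn f g K s := by
  apply le_of_forall_lt
  intro a ha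
  obtain ⟨c, hac, hc⟩ := EReal.lt_iff_exists_real_btwn.1 ha
  refine hac.trans_le (le_sInf ?_)
  rintro _ ⟨x, hx, rfl⟩
  have := (key_dual f g K s l c).1 hc.le x s hx
  simp only [sub_self, inner_zero_right, add_zero] at this
  change _ ≤ ((f x : ℝ) : EReal)
  exact_mod_cast this

theorem strong_dual [CompleteSpace Y] (f : E → ℝ) (g : E → Y) (K : Set Y)
    (hf : ConvexOn ℝ Set.univ f) (hgraph : Convex ℝ (gphGK g K)) (s : Y) (v : ℝ)
    (hv : valFn f g K s = (v : EReal))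
    (hlsc : LowerSemicontinuousAt (valFn f g K) s) (c : ℝ) (hc : c < v) :
    ∃ l, (c : EReal) ≤ (⟪s, l⟫ : EReal) - dualFn f g K l := by
  set A : Set (Y × ℝ) := {p | ∃ x, g x + p.1 ∈ K ∧ f x ≤ p.2} with hA
  have hconv : Convex ℝ A := by
    rintro ⟨s1, t1⟩ ⟨x1, hx1, h1⟩ ⟨s2, t2⟩ ⟨x2, hx2, h2⟩ a b ha hb hab
    refine ⟨a • x1 + b • x2, ?_, ?_⟩
    · have := hgraph (x := (x1, s1)) hx1 (y := (x2, s2)) hx2 ha hb hab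
      simpa [gphGK] using this
    · have h3 := hf.2 (mem_univ x1) (mem_univ x2) ha hb hab
      simp only [smul_eq_mul, Prod.snd_add, Prod.smul_snd] at h3 h1 h2 ⊢
      nlinarith [mul_le_mul_of_nonneg_left h1 ha, mul_le_mul_of_nonneg_left h2 hb]
  obtain ⟨c', hcc', hc'⟩ := exists_between hc
  have hnot : (s, c) ∉ closure A := by
    rw [mem_closure_iff_frequently, not_frequently]
    have e1 : ∀ᶠ s' in 𝓝 s, (c' : EReal) < valFn f g K s' :=
      hlsc c' (by change (c' : EReal) < valFn f g K s; rw [hv]; exact_mod_cast hc')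
    have e2 : ∀ᶠ t in 𝓝 c, t < c' := eventually_lt_nhds hcc'
    rw [nhds_prod_eq]
    filter_upwards [e1.prod_mk e2]
    rintro ⟨s', t⟩ ⟨h1, h2⟩ ⟨x, hx, hfx⟩
    have h3 : valFn f g K s' ≤ (f x : EReal) := sInf_le ⟨x, hx, rfl⟩
    have h4 : c' < f x := by exact_mod_cast h1.trans_le h3
    simp only at h2 hfx
    linarith
  obtain ⟨φ, u, hu, hφ⟩ := geometric_hahn_banach_point_closed hconv.closure isClosed_closure hnot
  have hA' : ∀ p ∈ A, φ (s, c) < φ p := fun p hp => hu.trans (hφ p (subset_closure hp))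
  set ψ : Y →L[ℝ] ℝ := φ.comp (ContinuousLinearMap.inl ℝ Y ℝ) with hψ
  set β : ℝ := φ (0, 1) with hβ
  have hdec : ∀ s' t, φ (s', t) = ψ s' + t * β := by
    intro s' t
    have : ((s', t) : Y × ℝ) = (s', 0) + t • (0, 1) := by simp
    rw [this, map_add, map_smul]
    simp [hψ, hβ]
  have hβpos : 0 < β := by
    have hlt : valFn f g K s < ((v + 1 : ℝ) : EReal) := by
      rw [hv]; exact_mod_cast lt_add_one v
    obtain ⟨_, ⟨x, hx, rfl⟩, hx2⟩ := sInf_lt_iff.1 hlt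
    have := hA' (s, v + 1) ⟨x, hx, EReal.coe_le_coe_iff.1 hx2.le⟩
    rw [hdec, hdec] at this
    by_contra hneg
    nlinarith
  refine ⟨(InnerProductSpace.toDual ℝ Y).symm (-(β⁻¹ • ψ)), ?_⟩
  rw [key_dual]
  intro x s' hx
  have := hA' (s', f x) ⟨x, hx, le_rfl⟩
  rw [hdec, hdec] at this
  rw [InnerProductSpace.toDual_symm_apply]
  simp only [ContinuousLinearMap.neg_apply, ContinuousLinearMap.smul_apply, smul_eq_mul, map_sub]
  have h5 : c + (-(β⁻¹ * ψ s') - -(β⁻¹ * ψ s)) = (c * β - (ψ s' - ψ s)) / β := by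
    field_simp
    try ring
  rw [h5, div_le_iff₀ hβpos]
  linarith

theorem dualFn_ne_bot' (f : E → ℝ) (g : E → Y) (K : Set Y) (hK : K.Nonempty) (l : Y) :
    dualFn f g K l ≠ ⊥ := by
  obtain ⟨y, hy⟩ := hK
  intro h
  have h1 : sInf ((fun p : E × Y => ((lagr f g p.1 p.2 l : ℝ) : EReal)) '' {p | p.2 ∈ K})
      ≤ ((lagr f g 0 y l : ℝ) : EReal) := sInf_le ⟨(0, y), hy, rfl⟩
  rw [dualFn, EReal.neg_eq_bot_iff] at h
  rw [h] at h1
  exact (EReal.coe_ne_top _ (top_le_iff.1 h1))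

theorem third_equiv (h : Y → EReal) (hb : ∀ l, h l ≠ ⊥) (s l l' : Y) :
    h l + (⟪s, l' - l⟫ : EReal) ≤ h l' ↔
      (⟪s, l'⟫ : EReal) - h l' ≤ (⟪s, l⟫ : EReal) - h l := by
  have h1 := hb l
  have h2 := hb l'
  rw [inner_sub_right]
  generalize h l = a at *
  generalize h l' = b at *
  induction a using EReal.rec with
  | bot => exact absurd rfl h1
  | top =>
    induction b using EReal.rec with
    | bot => exact absurd rfl h2
    | top => simp
    | coe r =>
      rw [EReal.top_add_coe, sub_eq_add_neg (_ : EReal) ⊤, EReal.neg_top, EReal.add_bot, top_le_iff, le_bot_iff]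
      rw [← EReal.coe_sub]
      exact iff_of_false (EReal.coe_ne_top _) (EReal.coe_ne_bot _)
  | coe q =>
    induction b using EReal.rec with
    | bot => exact absurd rfl h2
    | top => simp [sub_eq_add_neg]
    | coe r =>
      norm_cast
      constructor <;> intro h <;> linarith

/-- Proposition 4.1: for the least violated shift `s̄ ≠ 0` with
`val(P(s̄)) ∈ ℝ`: (i) if `ν` is lsc at `s̄` then `val(D(s̄)) = val(P(s̄))`;
(ii) if `∂ν(s̄) ≠ ∅` then moreover `Sol(D(s̄)) = ∂ν(s̄) = [∂θ]⁻¹(s̄)`. -/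
theorem dual_of_least_violated_shift {n : ℕ} {Y : Type*} [NormedAddCommGroup Y]
    [InnerProductSpace ℝ Y] [FiniteDimensional ℝ Y]
    (f : EuclideanSpace ℝ (Fin n) → ℝ) (g : EuclideanSpace ℝ (Fin n) → Y) (K : Set Y)
    (hfconv : ConvexOn ℝ Set.univ f)
    (hKne : K.Nonempty) (hKclosed : IsClosed K) (hKconv : Convex ℝ K)
    (hgraph : Convex ℝ (gphGK g K))
    (hSclosed : IsClosed (feasShifts g K))
    (sbar : Y) (hsbarS : sbar ∈ feasShifts g K)
    (hsbarmin : ∀ s ∈ feasShifts g K, ‖sbar‖ ≤ ‖s‖)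
    (hsbarne : sbar ≠ 0)
    (hval : ∃ v : ℝ, valFn f g K sbar = (v : EReal)) :
    -- (i)
    (LowerSemicontinuousAt (valFn f g K) sbar →
      dualVal f g K sbar = valFn f g K sbar) ∧
    -- (ii)
    ((esubdiff (valFn f g K) sbar).Nonempty →
      dualVal f g K sbar = valFn f g K sbar ∧
      dualSol f g K sbar = esubdiff (valFn f g K) sbar ∧
      dualSol f g K sbar = {l | sbar ∈ esubdiff (dualFn f g K) l}) := by
  obtain ⟨v, hv⟩ := hval
  have hle : dualVal f g K sbar ≤ valFn f g K sbar := iSup_le fun l => weak_dual f g K sbar l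
  refine ⟨fun hlsc => le_antisymm hle ?_, ?_⟩
  · rw [hv]
    apply le_of_forall_lt
    intro a ha
    obtain ⟨c, hac, hc⟩ := EReal.lt_iff_exists_real_btwn.1 ha
    obtain ⟨l, hl⟩ := strong_dual f g K hfconv hgraph sbar v hv hlsc c (by exact_mod_cast hc)
    exact hac.trans_le (hl.trans
      (le_iSup (fun l : Y => (⟪sbar, l⟫ : EReal) - dualFn f g K l) l))
  · rintro ⟨l0, hl0⟩
    have h0 := (key_sub f g K sbar l0 v hv).1 hl0
    refine ⟨le_antisymm hle ?_, ?_, ?_⟩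
    · rw [hv]
      exact h0.trans (le_iSup (fun l : Y => (⟪sbar, l⟫ : EReal) - dualFn f g K l) l0)
    · ext l
      rw [key_sub f g K sbar l v hv]
      constructor
      · intro h
        exact h0.trans (h l0)
      · intro h l'
        exact ((weak_dual f g K sbar l').trans_eq hv).trans h
    · ext l
      exact forall_congr' fun l' =>
        (third_equiv (dualFn f g K) (dualFn_ne_bot' f g K hKne) sbar l l').symm
end
end

section
/- The dual function θ is lower semi-continuous and convex. Suppose θ is proper and let r > 0. Then the Moreau–Yosida regularization satisfies θ_r(λ) = −inf{l_r(x,y,λ) : x ∈ ℝⁿ, y ∈ K}, where l_r is the augmented Lagrangian. Moreover, if (x(λ,r), y(λ,r)) ∈ argmin{l_r(x,y,λ) : x ∈ ℝⁿ, y ∈ K}, then P_{rθ}(λ) = λ + r[g(x(λ,r)) − y(λ,r)] and y(λ,r) − g(x(λ,r)) ∈ ∂θ(P_{rθ}(λ)). -/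
open Set Filter Topology Bornology Metric
open scoped RealInnerProductSpace

noncomputable section

variable {E : Type*} [NormedAddCommGroup E] [InnerProductSpace ℝ E]
variable {Y : Type*} [NormedAddCommGroup Y] [InnerProductSpace ℝ Y]

lemma aux_le_dual {f : E → ℝ} {g : E → Y} {K : Set Y} (x : E) {y : Y} (hy : y ∈ K) (l : Y) :
    ((-(lagr f g x y l) : ℝ) : EReal) ≤ dualFn f g K l := by
  unfold dualFn
  rw [EReal.coe_neg]
  apply EReal.neg_le_neg_iff.mpr
  exact sInf_le ⟨(x, y), hy, rfl⟩

lemma aux_dual_le {f : E → ℝ} {g : E → Y} {K : Set Y} {l : Y} {c : EReal}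
    (h : ∀ x y, y ∈ K → ((-(lagr f g x y l) : ℝ) : EReal) ≤ c) : dualFn f g K l ≤ c := by
  unfold dualFn
  rw [EReal.neg_le]
  apply le_sInf
  rintro _ ⟨⟨x, y⟩, hy, rfl⟩
  have := h x y hy
  rw [EReal.coe_neg] at this
  exact EReal.neg_le.mp this

lemma aux_dual_eq {f : E → ℝ} {g : E → Y} {K : Set Y} :
    dualFn f g K = fun l => ⨆ p : {p : E × Y // p.2 ∈ K},
      ((-(lagr f g p.1.1 p.1.2 l) : ℝ) : EReal) := by
  funext l
  apply le_antisymm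
  · apply aux_dual_le
    intro x y hy
    exact le_iSup (fun p : {p : E × Y // p.2 ∈ K} =>
      ((-(lagr f g p.1.1 p.1.2 l) : ℝ) : EReal)) ⟨(x, y), hy⟩
  · exact iSup_le fun p => aux_le_dual p.1.1 p.2 l

lemma aux_lsc (f : E → ℝ) (g : E → Y) (K : Set Y) : LowerSemicontinuous (dualFn f g K) := by
  rw [aux_dual_eq]
  apply lowerSemicontinuous_iSup
  intro p
  apply Continuous.lowerSemicontinuous
  apply continuous_coe_real_ereal.comp
  unfold lagr
  fun_prop

lemma aux_dual_le_real {f : E → ℝ} {g : E → Y} {K : Set Y} {l : Y} {c : ℝ} :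
    dualFn f g K l ≤ (c : EReal) ↔ ∀ x y, y ∈ K → -(lagr f g x y l) ≤ c := by
  constructor
  · intro h x y hy
    exact EReal.coe_le_coe_iff.mp ((aux_le_dual x hy l).trans h)
  · intro h
    exact aux_dual_le fun x y hy => EReal.coe_le_coe_iff.mpr (h x y hy)

lemma aux_conv (f : E → ℝ) (g : E → Y) (K : Set Y) : ERealConvexOn (dualFn f g K) := by
  rintro ⟨l, s⟩ h1 ⟨m, t⟩ h2 a b ha hb hab
  simp only [mem_ofPred_eq, aux_dual_le_real, Prod.smul_mk, Prod.mk_add_mk, smul_eq_mul] at *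
  intro x y hy
  have e1 := mul_le_mul_of_nonneg_left (h1 x y hy) ha
  have e2 := mul_le_mul_of_nonneg_left (h2 x y hy) hb
  unfold lagr at *
  rw [inner_add_left, real_inner_smul_left, real_inner_smul_left]
  have : f x = a * f x + b * f x := by rw [← add_mul, hab, one_mul]
  linarith

/-- The quadratic objective on `Y × ℝ`. -/
def auxQ (r : ℝ) (l : Y) (u : Y) (t : ℝ) : ℝ := t + ⟪l, u⟫ + r / 2 * ‖u‖ ^ 2

/-- The epigraph-type set. -/
def auxA (f : E → ℝ) (g : E → Y) (K : Set Y) : Set (Y × ℝ) :=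
  {q | ∃ x y, y ∈ K ∧ q.1 = g x - y ∧ f x ≤ q.2}

lemma auxA_convex {f : E → ℝ} {g : E → Y} {K : Set Y} (hf : ConvexOn ℝ Set.univ f)
    (hg : Convex ℝ (gphGK g K)) : Convex ℝ (auxA f g K) := by
  rintro ⟨u, s⟩ ⟨x, y, hy, h1, h2⟩ ⟨v, t⟩ ⟨x', y', hy', h1', h2'⟩ a b ha hb hab
  simp only at h1 h2 h1' h2'
  have hm : (x, -u) ∈ gphGK g K := by simpa [gphGK, h1] using hy
  have hm' : (x', -v) ∈ gphGK g K := by simpa [gphGK, h1'] using hy'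
  have := hg hm hm' ha hb hab
  refine ⟨a • x + b • x', _, this, ?_, ?_⟩
  · simp; abel
  · have e := hf.2 (mem_univ x) (mem_univ x') ha hb hab
    simp only [smul_eq_mul] at e
    have e1 := mul_le_mul_of_nonneg_left h2 ha
    have e2 := mul_le_mul_of_nonneg_left h2' hb
    simp only [Prod.smul_mk, Prod.mk_add_mk, smul_eq_mul]
    linarith

/-- Expansion along a segment. -/
lemma auxQ_seg (r : ℝ) (l u v : Y) (s t e : ℝ) :
    auxQ r l (u + e • (v - u)) (s + e * (t - s)) =
      auxQ r l u s + e * ((t - s) + ⟪l + r • u, v - u⟫) + e ^ 2 * (r / 2 * ‖v - u‖ ^ 2) := by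
  unfold auxQ
  rw [norm_add_sq_real, norm_smul, mul_pow, Real.norm_eq_abs, sq_abs, inner_add_right,
    inner_add_left, real_inner_smul_right, real_inner_smul_right, real_inner_smul_left]
  ring

lemma aux_first_order {C : Set (Y × ℝ)} (hC : Convex ℝ C) {r : ℝ} {l u : Y} {s : ℝ}
    (hu : (u, s) ∈ C) (hmin : ∀ q ∈ C, auxQ r l u s ≤ auxQ r l q.1 q.2)
    {v : Y} {t : ℝ} (hv : (v, t) ∈ C) :
    s + ⟪l + r • u, u⟫ ≤ t + ⟪l + r • u, v⟫ := by
  set D := (t - s) + ⟪l + r • u, v - u⟫ with hD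
  set B := r / 2 * ‖v - u‖ ^ 2 with hB
  have key : ∀ e : ℝ, 0 < e → e < 1 → 0 ≤ D + e * B := by
    intro e he he1
    have hmem : (u + e • (v - u), s + e * (t - s)) ∈ C := by
      have := hC.add_smul_sub_mem hu hv ⟨he.le, he1.le⟩
      simpa using this
    have h1 := hmin _ hmem
    simp only [auxQ_seg] at h1
    have h2 : 0 ≤ e * (D + e * B) := by rw [← hD, ← hB] at h1; linarith
    exact nonneg_of_mul_nonneg_right h2 he
  have hlim : Tendsto (fun e : ℝ => D + e * B) (𝓝[>] 0) (𝓝 (D + 0 * B)) := by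
    apply Tendsto.mono_left _ nhdsWithin_le_nhds
    exact (Continuous.tendsto (by fun_prop) _)
  have h0 : 0 ≤ D + 0 * B := by
    apply ge_of_tendsto hlim
    filter_upwards [Ioo_mem_nhdsGT (zero_lt_one' ℝ)] with e he
    exact key e he.1 he.2
  rw [hD, inner_sub_right] at h0
  linarith

lemma aux_exists_min [CompleteSpace Y] {C : Set (Y × ℝ)} (hC : Convex ℝ C) {r : ℝ} (hr : 0 < r)
    {l : Y} {p : ℝ} (hp : ∀ q ∈ C, p ≤ auxQ r l q.1 q.2)
    (hap : ∀ e : ℝ, 0 < e → ∃ q ∈ C, auxQ r l q.1 q.2 < p + e) :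
    ∃ u s, (u, s) ∈ closure C ∧ auxQ r l u s = p := by
  have hpos : ∀ k : ℕ, (0 : ℝ) < 1 / ((k : ℝ) + 1) := fun k => Nat.one_div_pos_of_nat
  choose a haC ha using fun k : ℕ => hap (1 / ((k : ℝ) + 1)) (hpos k)
  have hcs : CauchySeq (fun k => (a k).1) := by
    apply cauchySeq_of_le_tendsto_0 (fun N : ℕ => √(8 / r * (1 / ((N : ℝ) + 1))))
    · intro i j N hi hj
      apply Real.le_sqrt_of_sq_le
      rw [dist_eq_norm, norm_sub_rev]
      have hmem : ((a i).1 + (1 / 2 : ℝ) • ((a j).1 - (a i).1),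
          (a i).2 + (1 / 2 : ℝ) * ((a j).2 - (a i).2)) ∈ C := by
        have := hC.add_smul_sub_mem (haC i) (haC j) (t := 1 / 2) ⟨by norm_num, by norm_num⟩
        exact this
      have h1 := hp _ hmem
      simp only [auxQ_seg] at h1
      have h2 := auxQ_seg r l (a i).1 (a j).1 (a i).2 (a j).2 1
      simp only [one_smul, one_mul, add_sub_cancel] at h2
      have hi' := (ha i).le.trans (add_le_add_right (Nat.one_div_le_one_div (α := ℝ) hi) p)
      have hj' := (ha j).le.trans (add_le_add_right (Nat.one_div_le_one_div (α := ℝ) hj) p)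
      rw [div_mul_eq_mul_div, le_div_iff₀ hr]
      linarith
    · have := (tendsto_one_div_add_atTop_nhds_zero_nat (𝕜 := ℝ)).const_mul (8 / r)
      have := (Real.continuous_sqrt.tendsto _).comp this
      simpa [Function.comp_def] using this
  obtain ⟨u, hu⟩ := cauchySeq_tendsto_of_complete hcs
  have hq : Tendsto (fun k => auxQ r l (a k).1 (a k).2) atTop (𝓝 p) := by
    have h1 := (tendsto_one_div_add_atTop_nhds_zero_nat (𝕜 := ℝ)).const_add p
    rw [add_zero] at h1
    exact tendsto_of_tendsto_of_tendsto_of_le_of_le tendsto_const_nhds h1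
      (fun k => hp _ (haC k)) (fun k => (ha k).le)
  have hw : Tendsto (fun k => ⟪l, (a k).1⟫ + r / 2 * ‖(a k).1‖ ^ 2) atTop
      (𝓝 (⟪l, u⟫ + r / 2 * ‖u‖ ^ 2)) := by
    have hc : Continuous fun v : Y => ⟪l, v⟫ + r / 2 * ‖v‖ ^ 2 := by fun_prop
    exact (hc.tendsto u).comp hu
  have ht := hq.sub hw
  refine ⟨u, p - (⟪l, u⟫ + r / 2 * ‖u‖ ^ 2), ?_, by unfold auxQ; ring⟩
  have ht' : Tendsto (fun k => (a k).2) atTop (𝓝 (p - (⟪l, u⟫ + r / 2 * ‖u‖ ^ 2))) := by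
    refine ht.congr fun k => ?_
    unfold auxQ; ring
  exact mem_closure_of_tendsto (hu.prodMk_nhds ht') (Eventually.of_forall haC)

lemma aux_sq {r : ℝ} (hr : 0 < r) (l u m : Y) :
    -⟪m, u⟫ + ‖m - l‖ ^ 2 / (2 * r) =
      -⟪l, u⟫ - r / 2 * ‖u‖ ^ 2 + ‖m - (l + r • u)‖ ^ 2 / (2 * r) := by
  have : m - (l + r • u) = (m - l) - r • u := by abel
  rw [this, norm_sub_sq_real (m - l), norm_smul, mul_pow, Real.norm_eq_abs, sq_abs,
    real_inner_smul_right, inner_sub_left]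
  field_simp
  ring

lemma auxQ_le_of_A {f : E → ℝ} {g : E → Y} {K : Set Y} {r : ℝ} {l : Y} {p : ℝ}
    (h : ∀ x y, y ∈ K → p ≤ auglagr f g r x y l) : ∀ q ∈ auxA f g K, p ≤ auxQ r l q.1 q.2 := by
  rintro ⟨u, t⟩ ⟨x, y, hy, h1, h2⟩
  have := h x y hy
  simp only at h1 h2
  simp only [auxQ, auglagr, h1] at *
  linarith

/-- Lemma 4.1: `θ` is lsc convex; if `θ` is proper and `r > 0`, then
the Moreau–Yosida regularization satisfies `θ_r(λ) = -inf {l_r(x,y,λ) : x, y ∈ K}`, and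
if `(x̂, ŷ)` minimizes `l_r(·,·,λ)` over `ℝⁿ × K`, then
`P_{rθ}(λ) = λ + r(g x̂ - ŷ)` and `ŷ - g x̂ ∈ ∂θ(P_{rθ}(λ))`. -/
theorem moreau_dualFn_and_prox {n : ℕ} {Y : Type*} [NormedAddCommGroup Y]
    [InnerProductSpace ℝ Y] [FiniteDimensional ℝ Y]
    (f : EuclideanSpace ℝ (Fin n) → ℝ) (g : EuclideanSpace ℝ (Fin n) → Y) (K : Set Y)
    (hfconv : ConvexOn ℝ Set.univ f)
    (hKne : K.Nonempty) (hKclosed : IsClosed K) (hKconv : Convex ℝ K)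
    (hgraph : Convex ℝ (gphGK g K)) :
    (LowerSemicontinuous (dualFn f g K) ∧ ERealConvexOn (dualFn f g K)) ∧
    (ERealProper (dualFn f g K) → ∀ r : ℝ, 0 < r →
      (∀ l : Y, moreau (dualFn f g K) r l =
        - sInf ((fun p : EuclideanSpace ℝ (Fin n) × Y =>
            ((auglagr f g r p.1 p.2 l : ℝ) : EReal)) '' {p | p.2 ∈ K})) ∧
      (∀ (l : Y) (xhat : EuclideanSpace ℝ (Fin n)) (yhat : Y), yhat ∈ K →
        (∀ x y, y ∈ K → auglagr f g r xhat yhat l ≤ auglagr f g r x y l) →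
        proxSet (dualFn f g K) r l = {l + r • (g xhat - yhat)} ∧
        yhat - g xhat ∈ esubdiff (dualFn f g K) (l + r • (g xhat - yhat)))) := by
  refine ⟨⟨aux_lsc f g K, aux_conv f g K⟩, fun _ r hr => ?_⟩
  have hA := auxA_convex hfconv hgraph
  refine ⟨fun l => ?_, fun l x₀ y₀ hy₀ hmin => ?_⟩
  · apply le_antisymm
    · rw [EReal.le_neg]
      by_contra hcon
      rw [not_le] at hcon
      have hge : ∀ x y, y ∈ K → sInf ((fun p : EuclideanSpace ℝ (Fin n) × Y =>
            ((auglagr f g r p.1 p.2 l : ℝ) : EReal)) '' {p | p.2 ∈ K}) ≤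
            ((auglagr f g r x y l : ℝ) : EReal) := fun x y hy => sInf_le ⟨(x, y), hy, rfl⟩
      set V := sInf ((fun p : EuclideanSpace ℝ (Fin n) × Y =>
            ((auglagr f g r p.1 p.2 l : ℝ) : EReal)) '' {p | p.2 ∈ K}) with hV
      obtain ⟨y₁, hy₁⟩ := hKne
      have hbot : V ≠ ⊥ := by
        intro hb
        rw [hb] at hcon
        exact absurd hcon not_lt_bot
      have htop : V ≠ ⊤ := by
        intro ht
        have := hge 0 y₁ hy₁
        rw [ht, top_le_iff] at this
        exact EReal.coe_ne_top _ this
      lift V to ℝ using ⟨htop, hbot⟩ with p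
      have hp := auxQ_le_of_A fun x y hy => EReal.coe_le_coe_iff.mp (hge x y hy)
      have hap : ∀ e : ℝ, 0 < e → ∃ q ∈ auxA f g K, auxQ r l q.1 q.2 < p + e := by
        intro e he
        have h1 : (p : EReal) < ((p + e : ℝ) : EReal) := EReal.coe_lt_coe_iff.mpr (by linarith)
        rw [hV, sInf_lt_iff] at h1
        obtain ⟨_, ⟨⟨x, y⟩, hy, rfl⟩, h2⟩ := h1
        exact ⟨(g x - y, f x), ⟨x, y, hy, rfl, le_rfl⟩, EReal.coe_lt_coe_iff.mp h2⟩
      have : CompleteSpace Y := FiniteDimensional.complete ℝ Y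
      obtain ⟨u, s, hus, hq⟩ := aux_exists_min hA hr hp hap
      have hcl : ∀ q ∈ closure (auxA f g K), auxQ r l u s ≤ auxQ r l q.1 q.2 := by
        rw [hq]
        have hcont : Continuous fun q : Y × ℝ => auxQ r l q.1 q.2 := by unfold auxQ; fun_prop
        exact closure_minimal hp (isClosed_le continuous_const hcont)
      have hfo : dualFn f g K (l + r • u) ≤ ((-(s + ⟪l + r • u, u⟫) : ℝ) : EReal) := by
        rw [aux_dual_le_real]
        intro x y hy
        have := aux_first_order hA.closure hus hcl
          (subset_closure (⟨x, y, hy, rfl, le_rfl⟩ : (g x - y, f x) ∈ auxA f g K))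
        unfold lagr
        linarith
      have hle : moreau (dualFn f g K) r l ≤ ((-p : ℝ) : EReal) := by
        refine (iInf_le _ (l + r • u)).trans ((add_le_add_left hfo _).trans ?_)
        rw [← EReal.coe_add, EReal.coe_le_coe_iff]
        have e := aux_sq hr l u (l + r • u)
        simp only [sub_self, norm_zero] at e
        unfold auxQ at hq
        norm_num at e ⊢
        linarith
      rw [EReal.coe_neg] at hle
      exact absurd (EReal.le_neg.mp hle) (not_le.mpr hcon)
    · apply le_iInf
      intro m
      rw [EReal.neg_le]
      apply le_sInf
      rintro _ ⟨⟨x, y⟩, hy, rfl⟩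
      rw [EReal.neg_le]
      refine le_trans ?_ (add_le_add_left (aux_le_dual x (show y ∈ K from hy) m) _)
      rw [← EReal.coe_add, ← EReal.coe_neg, EReal.coe_le_coe_iff]
      have e := aux_sq hr l (g x - y) m
      have : 0 ≤ ‖m - (l + r • (g x - y))‖ ^ 2 / (2 * r) := by positivity
      simp only [auglagr, lagr]
      linarith
  · set u := g x₀ - y₀ with hu
    set m := l + r • u with hm
    have hmem : (u, f x₀) ∈ auxA f g K := ⟨x₀, y₀, hy₀, rfl, le_rfl⟩
    have hq := auxQ_le_of_A (hmin)
    have hθ : dualFn f g K m = ((-(f x₀ + ⟪m, u⟫) : ℝ) : EReal) := by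
      apply le_antisymm
      · rw [aux_dual_le_real]
        intro x y hy
        have := aux_first_order hA hmem hq
          (⟨x, y, hy, rfl, le_rfl⟩ : (g x - y, f x) ∈ auxA f g K)
        unfold lagr
        linarith
      · exact aux_le_dual x₀ hy₀ m
    have hlow : ∀ m', ((-(f x₀ + ⟪m', u⟫) : ℝ) : EReal) ≤ dualFn f g K m' :=
      fun m' => aux_le_dual x₀ hy₀ m'
    have e0 := aux_sq hr l u m
    rw [← hm, sub_self, norm_zero] at e0
    have hz : (0 : ℝ) ^ 2 / (2 * r) = 0 := by simp
    rw [hz] at e0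
    refine ⟨?_, ?_⟩
    · ext m'
      rw [mem_singleton_iff]
      constructor
      · intro h
        have h1 := h m
        have h2 := (add_le_add_left (hlow m') _).trans h1
        rw [hθ, ← EReal.coe_add, ← EReal.coe_add, EReal.coe_le_coe_iff] at h2
        have e := aux_sq hr l u m'
        rw [← hm] at e
        have h3 : ‖m' - m‖ ^ 2 / (2 * r) ≤ 0 := by linarith
        have h4 : ‖m' - m‖ ^ 2 ≤ 0 := by
          rw [div_le_iff₀ (by positivity), zero_mul] at h3
          exact h3
        have h5 : ‖m' - m‖ = 0 := by
          have := sq_nonneg ‖m' - m‖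
          exact pow_eq_zero_iff (two_ne_zero) |>.mp (le_antisymm h4 this)
        exact sub_eq_zero.mp (norm_eq_zero.mp h5)
      · rintro rfl m''
        refine le_trans ?_ (add_le_add_left (hlow m'') _)
        rw [hθ, ← EReal.coe_add, ← EReal.coe_add, EReal.coe_le_coe_iff]
        have e := aux_sq hr l u m''
        have : 0 ≤ ‖m'' - (l + r • u)‖ ^ 2 / (2 * r) := by positivity
        linarith
    · intro m'
      refine le_trans ?_ (hlow m')
      rw [hθ, ← EReal.coe_add, EReal.coe_le_coe_iff]
      have : y₀ - g x₀ = -u := by rw [hu]; abel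
      rw [this, inner_neg_left, inner_sub_right u m' m, real_inner_comm m' u, real_inner_comm m u]
      linarith
end
end
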